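/- arXiv:1409.6101 — 3 statements merged into one kernel-verified Lean document; each statement's English description precedes it below -/
import Mathlib

section
/- Let 0 ≤ ω < ω′ and let f be holomorphic on the strip St_{ω′} = {z ∈ ℂ : |Im z| < ω′}, and suppose there exist C ≥ 0 and α > 1 such that |f(z)| ≤ C·(1+|z|)^{−α} for all z ∈ St_{ω′}. Then there exists a measurable function g : ℝ → ℂ with ∫_ℝ e^{ω|s|}|g(s)| ds < ∞ such that f(z) = ∫_ℝ e^{−isz} g(s) ds for all z ∈ St_ω. (Every function in the elementary class E(St_{ω′}) is the Fourier transform of an element of M_ω(ℝ).) -/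
open MeasureTheory Filter Topology

/-!
Let `f` be holomorphic on `|Im z| < a` and dominated there by an integrable function of `Re z`.
For `|y| < a` the contour of `∫ e^{isz} f(z) dz` can be moved from `ℝ` to `ℝ + iy`, where the kernel
has modulus `e^{-sy}`. Taking `y = δ sign s` with `0 ≤ ω < δ < a` shows that the inverse Fourier
transform `g` of `f` on `ℝ` is `O(e^{-δ|s|})`, and for fixed `y` it shows that the inverse Fourier
transform of `x ↦ f(x + iy)` is `e^{sy} g(s)`. Fourier inversion on that line gives the formula.

To move the contour, integrate over rectangles: the contribution of the vertical sides at `±T`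
converges as `T → ∞` and is integrable in `T`, so its limit is `0`.
-/

open Complex (I)
open scoped Complex Real FourierTransform Interval

section RealLine

variable {E : Type*} [NormedAddCommGroup E]

lemma integrable_exp_neg_mul_abs {c : ℝ} (hc : 0 < c) :
    Integrable (fun s : ℝ ↦ rexp (-c * |s|)) := by
  rw [← integrableOn_univ, ← Set.Iic_union_Ioi (a := (0 : ℝ))]
  refine IntegrableOn.union ?_ ?_
  · refine (integrableOn_exp_mul_Iic hc 0).congr_fun (fun s hs ↦ ?_) measurableSet_Iic
    simp [abs_of_nonpos (Set.mem_Iic.1 hs)]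
  · refine (integrableOn_exp_mul_Ioi (neg_lt_zero.2 hc) 0).congr_fun (fun s hs ↦ ?_)
      measurableSet_Ioi
    simp [abs_of_pos (Set.mem_Ioi.1 hs)]

lemma integrable_exp_mul_abs_mul_norm_of_norm_le {g : ℝ → E} (hg : AEStronglyMeasurable g)
    {ω δ K : ℝ} (hωδ : ω < δ) (hbound : ∀ s, ‖g s‖ ≤ K * rexp (-δ * |s|)) :
    Integrable (fun s : ℝ ↦ rexp (ω * |s|) * ‖g s‖) := by
  have hexp : Continuous fun s : ℝ ↦ rexp (ω * |s|) := by fun_prop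
  refine ((integrable_exp_neg_mul_abs (sub_pos.2 hωδ)).const_mul K).mono'
    (hexp.aestronglyMeasurable.mul hg.norm) (.of_forall fun s ↦ ?_)
  rw [Real.norm_of_nonneg (by positivity)]
  calc rexp (ω * |s|) * ‖g s‖
      ≤ rexp (ω * |s|) * (K * rexp (-δ * |s|)) := by gcongr; exact hbound s
    _ = K * rexp (-(δ - ω) * |s|) := by
        rw [mul_left_comm, ← Real.exp_add]
        ring_nf

variable [NormedSpace ℝ E]

lemma integral_eq_zero_of_norm_intervalIntegral_neg_le {d : ℝ → E} (hd : Integrable d)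
    {ψ : ℝ → ℝ} (hψ : Integrable ψ) (hbound : ∀ T, ‖∫ x in (-T)..T, d x‖ ≤ ψ T) :
    ∫ x, d x = 0 := by
  have htendsto : Tendsto (fun T : ℝ ↦ ∫ x in (-T)..T, d x) atTop (𝓝 (∫ x, d x)) :=
    intervalIntegral_tendsto_integral hd tendsto_neg_atTop_atBot tendsto_id
  have hcont : Continuous fun T : ℝ ↦ ∫ x in (-T)..T, d x := by
    have hprim := intervalIntegral.continuous_primitive (fun _ _ ↦ hd.intervalIntegrable) 0
    refine (hprim.sub (hprim.comp continuous_neg)).congr fun T ↦ ?_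
    exact intervalIntegral.integral_interval_sub_left hd.intervalIntegrable hd.intervalIntegrable
  have hint : Integrable fun T : ℝ ↦ ∫ x in (-T)..T, d x :=
    hψ.mono' hcont.aestronglyMeasurable (.of_forall hbound)
  refine (hint.integrableAtFilter atTop).eq_zero_of_tendsto (fun s hs ↦ ?_) htendsto
  obtain ⟨b, hb⟩ := mem_atTop_sets.1 hs
  exact measure_mono_top hb Real.volume_Ici

end RealLine

variable {E : Type*} [NormedAddCommGroup E] [NormedSpace ℂ E]

/-- The functions holomorphic on the strip `|Im z| < a` and dominated there by an integrable
function `φ` of `Re z`; the elementary class is the case `φ x = C * (1 + |x|) ^ (-α)`. -/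
structure DominatedOnStrip (f : ℂ → E) (a : ℝ) (φ : ℝ → ℝ) : Prop where
  differentiableOn : DifferentiableOn ℂ f {z : ℂ | |z.im| < a}
  integrable_bound : Integrable φ
  norm_le : ∀ z : ℂ, |z.im| < a → ‖f z‖ ≤ φ z.re

/-- The inverse Fourier transform of the restriction of `f` to `ℝ`, normalised so that
`f z = ∫ e^{-isz} (stripDensity f s) ds`. -/
noncomputable def stripDensity (f : ℂ → E) (s : ℝ) : E :=
  (2 * π)⁻¹ • ∫ x : ℝ, cexp (s * x * I) • f x

lemma norm_cexp_ofReal_mul_mul_I (s : ℝ) (z : ℂ) : ‖cexp (s * z * I)‖ = rexp (-(s * z.im)) := by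
  simp [Complex.norm_exp]

namespace DominatedOnStrip

variable {f : ℂ → E} {a y : ℝ} {φ : ℝ → ℝ}

lemma of_rpow_decay {C α : ℝ} (hf : DifferentiableOn ℂ f {z : ℂ | |z.im| < a}) (hC : 0 ≤ C)
    (hα : 1 < α) (hbound : ∀ z : ℂ, |z.im| < a → ‖f z‖ ≤ C * (1 + ‖z‖) ^ (-α)) :
    DominatedOnStrip f a (fun x ↦ C * (1 + |x|) ^ (-α)) where
  differentiableOn := hf
  integrable_bound := by
    simpa only [Real.norm_eq_abs] using
      (integrable_one_add_norm (E := ℝ) (μ := volume) (by simpa using hα)).const_mul C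
  norm_le z hz := by
    refine (hbound z hz).trans (mul_le_mul_of_nonneg_left ?_ hC)
    exact Real.rpow_le_rpow_of_nonpos (by positivity)
      (add_le_add_right (Complex.abs_re_le_norm z) 1) (by linarith)

lemma cexp_smul (hf : DominatedOnStrip f a φ) (s : ℝ) :
    DominatedOnStrip (fun z ↦ cexp (s * z * I) • f z) a (fun x ↦ rexp (|s| * a) * φ x) where
  differentiableOn :=
    (by fun_prop : Differentiable ℂ fun z : ℂ ↦ cexp (s * z * I)).differentiableOn.smul
      hf.differentiableOn
  integrable_bound := hf.integrable_bound.const_mul _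
  norm_le z hz := by
    have hexponent : -(s * z.im) ≤ |s| * a :=
      calc -(s * z.im) ≤ |s * z.im| := neg_le_abs _
        _ = |s| * |z.im| := abs_mul _ _
        _ ≤ |s| * a := by gcongr
    rw [norm_smul, norm_cexp_ofReal_mul_mul_I]
    gcongr
    exact hf.norm_le z hz

lemma norm_line_le (hf : DominatedOnStrip f a φ) (hy : |y| < a) (x : ℝ) :
    ‖f (x + y * I)‖ ≤ φ x := by
  simpa using hf.norm_le (x + y * I) (by simpa using hy)

lemma continuous_line (hf : DominatedOnStrip f a φ) (hy : |y| < a) :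
    Continuous fun x : ℝ ↦ f (x + y * I) :=
  hf.differentiableOn.continuousOn.comp_continuous (by fun_prop) fun x ↦ by simpa using hy

lemma continuous_comp_ofReal (hf : DominatedOnStrip f a φ) (ha : 0 < a) :
    Continuous fun x : ℝ ↦ f x := by
  simpa using hf.continuous_line (y := 0) (by simpa using ha)

lemma integrable_line (hf : DominatedOnStrip f a φ) (hy : |y| < a) :
    Integrable fun x : ℝ ↦ f (x + y * I) :=
  hf.integrable_bound.mono' (hf.continuous_line hy).aestronglyMeasurable
    (.of_forall (hf.norm_line_le hy))

lemma integrable_comp_ofReal (hf : DominatedOnStrip f a φ) (ha : 0 < a) :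
    Integrable fun x : ℝ ↦ f x := by
  simpa using hf.integrable_line (y := 0) (by simpa using ha)

lemma norm_integral_vertical_le (hf : DominatedOnStrip f a φ) (hy : |y| < a) (T : ℝ) :
    ‖∫ u in (0 : ℝ)..y, f (T + u * I)‖ ≤ φ T * |y| := by
  have hbound (u : ℝ) (hu : u ∈ Ι 0 y) : ‖f (T + u * I)‖ ≤ φ T := by
    have huy : |u| ≤ |y| := by
      simpa using Set.abs_sub_left_of_mem_uIcc (Set.uIoc_subset_uIcc hu)
    exact hf.norm_line_le (huy.trans_lt hy) T
  simpa using intervalIntegral.norm_integral_le_of_norm_le_const hbound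

lemma continuous_stripDensity (hf : DominatedOnStrip f a φ) (ha : 0 < a) :
    Continuous (stripDensity f) := by
  have hcont := hf.continuous_comp_ofReal ha
  refine (continuous_of_dominated (bound := φ) (fun s ↦ ?_) (fun s ↦ .of_forall fun x ↦ ?_)
    hf.integrable_bound (.of_forall fun x ↦ ?_)).const_smul _
  · exact ((by fun_prop : Continuous fun x : ℝ ↦ cexp (s * x * I)).smul hcont).aestronglyMeasurable
  · rw [norm_smul, norm_cexp_ofReal_mul_mul_I]
    simpa using hf.norm_le x (by simpa using ha)
  · fun_prop

lemma intervalIntegral_sub_line_eq (hf : DominatedOnStrip f a φ) (hy : |y| < a) (T : ℝ) :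
    (∫ x in (-T)..T, f x) - ∫ x in (-T)..T, f (x + y * I) =
      I • (∫ u in (0 : ℝ)..y, f ((-T : ℝ) + u * I)) - I • ∫ u in (0 : ℝ)..y, f (T + u * I) := by
  have hrect : DifferentiableOn ℂ f ([[-T, T]] ×ℂ [[0, y]]) := by
    refine hf.differentiableOn.mono fun z hz ↦ ?_
    have him : |z.im| ≤ |y| := by simpa using Set.abs_sub_left_of_mem_uIcc hz.2
    exact him.trans_lt hy
  have hcauchy := Complex.integral_boundary_rect_eq_zero_of_differentiableOn f
    (-T : ℝ) (T + y * I) (by simpa using hrect)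
  simp only [Complex.ofReal_re, Complex.ofReal_im, Complex.ofReal_zero, Complex.add_re,
    Complex.add_im, Complex.mul_re, Complex.mul_im, Complex.I_re, Complex.I_im, mul_zero, mul_one,
    zero_mul, zero_add, add_zero, sub_self] at hcauchy
  rw [← sub_eq_zero, ← hcauchy]
  abel

lemma integral_line_eq (hf : DominatedOnStrip f a φ) (hy : |y| < a) :
    ∫ x : ℝ, f (x + y * I) = ∫ x : ℝ, f x := by
  have hreal : Integrable fun x : ℝ ↦ f x := hf.integrable_comp_ofReal ((abs_nonneg y).trans_lt hy)
  have hline := hf.integrable_line hy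
  refine (sub_eq_zero.1 ?_).symm
  rw [← integral_sub hreal hline]
  refine integral_eq_zero_of_norm_intervalIntegral_neg_le (hreal.sub hline)
    ((hf.integrable_bound.comp_neg.add hf.integrable_bound).mul_const |y|) fun T ↦ ?_
  rw [intervalIntegral.integral_sub hreal.intervalIntegrable hline.intervalIntegrable,
    hf.intervalIntegral_sub_line_eq hy, ← smul_sub, norm_smul, Complex.norm_I, one_mul,
    Pi.add_apply, add_mul]
  exact (norm_sub_le _ _).trans
    (add_le_add (hf.norm_integral_vertical_le hy (-T)) (hf.norm_integral_vertical_le hy T))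

lemma stripDensity_eq_integral_line (hf : DominatedOnStrip f a φ) (hy : |y| < a) (s : ℝ) :
    stripDensity f s = (2 * π)⁻¹ • ∫ x : ℝ, cexp (s * (x + y * I) * I) • f (x + y * I) := by
  rw [stripDensity, (hf.cexp_smul s).integral_line_eq hy]

lemma norm_stripDensity_le (hf : DominatedOnStrip f a φ) (hy : |y| < a) (s : ℝ) :
    ‖stripDensity f s‖ ≤ (2 * π)⁻¹ * (∫ x, φ x) * rexp (-(s * y)) := by
  rw [hf.stripDensity_eq_integral_line hy, norm_smul, Real.norm_of_nonneg (by positivity),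
    mul_assoc, ← integral_mul_const]
  gcongr
  refine norm_integral_le_of_norm_le (hf.integrable_bound.mul_const _) (.of_forall fun x ↦ ?_)
  calc ‖cexp (s * (x + y * I) * I) • f (x + y * I)‖
      = rexp (-(s * y)) * ‖f (x + y * I)‖ := by
        rw [norm_smul, norm_cexp_ofReal_mul_mul_I]
        simp
    _ ≤ rexp (-(s * y)) * φ x := by gcongr; exact hf.norm_line_le hy x
    _ = φ x * rexp (-(s * y)) := mul_comm _ _

lemma norm_stripDensity_le_exp_neg_mul_abs (hf : DominatedOnStrip f a φ) {δ : ℝ} (hδ : |δ| < a)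
    (s : ℝ) : ‖stripDensity f s‖ ≤ (2 * π)⁻¹ * (∫ x, φ x) * rexp (-δ * |s|) := by
  rcases abs_cases s with ⟨hs, -⟩ | ⟨hs, -⟩
  · simpa [hs, mul_comm] using hf.norm_stripDensity_le hδ s
  · simpa [hs, mul_comm] using hf.norm_stripDensity_le (y := -δ) (by simpa using hδ) s

lemma integrable_exp_mul_abs_mul_norm_stripDensity (hf : DominatedOnStrip f a φ) (ha : 0 < a)
    {ω : ℝ} (hω : ω < a) : Integrable fun s : ℝ ↦ rexp (ω * |s|) * ‖stripDensity f s‖ := by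
  obtain ⟨δ, hδ, hδa⟩ := exists_between (max_lt ha hω)
  rw [max_lt_iff] at hδ
  exact integrable_exp_mul_abs_mul_norm_of_norm_le
    (hf.continuous_stripDensity ha).aestronglyMeasurable hδ.2
    (hf.norm_stripDensity_le_exp_neg_mul_abs (by rwa [abs_of_pos hδ.1]))

lemma integrable_cexp_smul_stripDensity (hf : DominatedOnStrip f a φ) (hy : |y| < a) :
    Integrable fun s : ℝ ↦ cexp (s * y) • stripDensity f s := by
  have ha : 0 < a := (abs_nonneg y).trans_lt hy
  have hexp : Continuous fun s : ℝ ↦ cexp (s * y) := by fun_prop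
  refine (hf.integrable_exp_mul_abs_mul_norm_stripDensity ha hy).mono'
    (hexp.smul (hf.continuous_stripDensity ha)).aestronglyMeasurable (.of_forall fun s ↦ ?_)
  have hexponent : s * y ≤ |y| * |s| := by
    rw [← abs_mul, mul_comm]
    exact le_abs_self _
  rw [norm_smul, Complex.norm_exp, ← Complex.ofReal_mul, Complex.ofReal_re]
  gcongr

lemma fourierInv_line_eq (hf : DominatedOnStrip f a φ) (hy : |y| < a) (w : ℝ) :
    𝓕⁻ (fun x : ℝ ↦ f (x + y * I)) w =
      (2 * π) • cexp ((2 * π * w : ℝ) * y) • stripDensity f (2 * π * w) := by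
  rw [hf.stripDensity_eq_integral_line hy, smul_comm, smul_inv_smul₀ (by positivity),
    ← integral_smul, Real.fourierInv_eq']
  refine integral_congr_ae (.of_forall fun x ↦ ?_)
  simp only [smul_smul, ← Complex.exp_add]
  congr 2
  simp only [RCLike.inner_apply, Real.ringHom_apply, Complex.ofReal_mul, Complex.ofReal_ofNat]
  linear_combination (-2 * π * w * y : ℂ) * Complex.I_sq

lemma integrable_fourier_line (hf : DominatedOnStrip f a φ) (hy : |y| < a) :
    Integrable (𝓕 fun x : ℝ ↦ f (x + y * I)) := by
  have hinv : Integrable (𝓕⁻ fun x : ℝ ↦ f (x + y * I)) := by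
    rw [funext (hf.fourierInv_line_eq hy)]
    exact ((hf.integrable_cexp_smul_stripDensity hy).comp_mul_left' Real.two_pi_pos.ne').smul _
  simpa [Real.fourierInv_eq_fourier_neg] using hinv.comp_neg

lemma eq_integral_stripDensity [CompleteSpace E] (hf : DominatedOnStrip f a φ) {z : ℂ}
    (hz : |z.im| < a) :
    f z = ∫ s : ℝ, cexp (-I * s * z) • stripDensity f s := by
  have hinversion : 𝓕 (𝓕⁻ fun x : ℝ ↦ f (x + z.im * I)) z.re = f z := by
    simpa using congrFun ((hf.continuous_line hz).fourier_fourierInv_eq (hf.integrable_line hz)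
      (hf.integrable_fourier_line hz)) z.re
  have hintegrand (w : ℝ) : cexp ((-2 * π * w * z.re : ℝ) * I) •
      𝓕⁻ (fun x : ℝ ↦ f (x + z.im * I)) w =
        (2 * π) • cexp (-I * (2 * π * w : ℝ) * z) • stripDensity f (2 * π * w) := by
    rw [hf.fourierInv_line_eq hz, smul_comm, smul_smul _ _ (stripDensity f _), ← Complex.exp_add]
    congr 3
    conv_rhs => rw [← Complex.re_add_im z]
    push_cast
    linear_combination (2 * π * w * z.im : ℂ) * Complex.I_sq
  calc f z = ∫ w : ℝ, (2 * π) • cexp (-I * (2 * π * w : ℝ) * z) • stripDensity f (2 * π * w) := by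
        rw [← hinversion, Real.fourier_real_eq_integral_exp_smul]
        exact integral_congr_ae (.of_forall hintegrand)
    _ = ∫ s : ℝ, cexp (-I * s * z) • stripDensity f s := by
        rw [integral_smul,
          Measure.integral_comp_mul_left (fun s : ℝ ↦ cexp (-I * s * z) • stripDensity f s),
          abs_of_pos (by positivity), smul_inv_smul₀ (by positivity)]

end DominatedOnStrip

theorem elementary_function_is_fourier_transform_general [CompleteSpace E] {f : ℂ → E} {a : ℝ}
    {φ : ℝ → ℝ} (ha : 0 < a) (hf : DominatedOnStrip f a φ) :
    ∃ g : ℝ → E, Continuous g ∧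
      (∀ ω < a, Integrable fun s : ℝ ↦ rexp (ω * |s|) * ‖g s‖) ∧
      ∀ z : ℂ, |z.im| < a → f z = ∫ s : ℝ, cexp (-I * s * z) • g s :=
  ⟨stripDensity f, hf.continuous_stripDensity ha,
    fun _ ↦ hf.integrable_exp_mul_abs_mul_norm_stripDensity ha,
    fun _ ↦ hf.eq_integral_stripDensity⟩

/-- Every function in the elementary class `E(St_{ω'})` (holomorphic on
the strip `St_{ω'}` with decay `|f(z)| ≤ C(1+|z|)^{-α}`, `α > 1`) is the Fourier
transform of an element of `M_ω(ℝ)` for `0 ≤ ω < ω'`: there is a measurable `g` with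
`∫ e^{ω|s|}|g(s)| ds < ∞` and `f(z) = ∫ e^{-isz} g(s) ds` on `St_ω` (with `St_0 = ℝ`). -/
theorem elementary_function_is_fourier_transform
    (ω ω' : ℝ) (hω : 0 ≤ ω) (hωω' : ω < ω') (f : ℂ → ℂ)
    (hf : DifferentiableOn ℂ f {z : ℂ | |z.im| < ω'})
    (C α : ℝ) (hC : 0 ≤ C) (hα : 1 < α)
    (hbound : ∀ z : ℂ, |z.im| < ω' → ‖f z‖ ≤ C * (1 + ‖z‖) ^ (-α)) :
    ∃ g : ℝ → ℂ, Measurable g ∧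
      Integrable (fun s : ℝ => Real.exp (ω * |s|) * ‖g s‖) ∧
      ∀ z : ℂ, (|z.im| < ω ∨ z.im = 0) →
        f z = ∫ s : ℝ, Complex.exp (-Complex.I * s * z) * g s := by
  obtain ⟨g, hg, hint, hrep⟩ := elementary_function_is_fourier_transform_general
    (hω.trans_lt hωω') (.of_rpow_decay hf hC hα hbound)
  exact ⟨g, hg.measurable, hint ω hωω', fun z hz ↦ hrep z <|
    hz.elim (·.trans hωω') fun h ↦ by simpa only [h, abs_zero] using hω.trans_lt hωω'⟩
end

section
/- Let X be a complex Banach space, (U(s))_{s∈ℝ} a C₀-group on X, N > 0, and let g : ℝ → ℂ be integrable with g(s) = 0 for |s| > N. Let φ, ψ : ℝ → ℂ be continuous with compact support such that (ψ∗φ)(s) = 1 for all s with |s| ≤ N, where (ψ∗φ)(s) = ∫_ℝ ψ(s−t)φ(t) dt. Then for every x ∈ X, ∫_ℝ φ(t)·U(t)( ∫_ℝ g(s)·ψ(s−t)·U(s−t)x ds ) dt = ∫_ℝ g(s)·U(s)x ds. (This is the factorization U_μ = P ∘ L_μ ∘ ι underlying the transference principle.) -/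
open MeasureTheory Filter Topology

/-!
By the group law `U t ∘ U (s - t) = U s`, the outer factor `U t` cancels the shift in the inner
integral, so that the inner integral becomes `∫ ψ (s - t) • g s • U s x ds`. Fubini then moves the
integration over `t` inside, where it only sees the scalar `ψ (s - t) * φ t` and produces the
convolution `(ψ ∗ φ) s`, which is `1` wherever `g s ≠ 0`.
-/

section Kernel

variable {α β 𝕜 E : Type*} [MeasurableSpace α] [MeasurableSpace β]
  [NormedAddCommGroup E] {μ : Measure α} {ν : Measure β}
  {k : α → β → 𝕜} {φ : α → 𝕜} {f : β → E} {C : ℝ}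

theorem integrable_uncurry_smul_smul_of_bounded [NormedRing 𝕜] [Module 𝕜 E] [IsBoundedSMul 𝕜 E]
    (hk : AEStronglyMeasurable k.uncurry (μ.prod ν)) (hkC : ∀ a b, ‖k a b‖ ≤ C)
    (hφ : Integrable φ μ) (hf : Integrable f ν) :
    Integrable (Function.uncurry fun a b ↦ k a b • φ a • f b) (μ.prod ν) :=
  (hφ.smul_prod hf).bdd_smul C hk (.of_forall fun p ↦ hkC p.1 p.2)

theorem integral_smul_integral_kernel_smul [RCLike 𝕜] [NormedSpace ℝ E] [NormedSpace 𝕜 E]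
    [CompleteSpace E] [SFinite μ] [SFinite ν]
    (hk : AEStronglyMeasurable k.uncurry (μ.prod ν)) (hkC : ∀ a b, ‖k a b‖ ≤ C)
    (hφ : Integrable φ μ) (hf : Integrable f ν) :
    ∫ a, φ a • ∫ b, k a b • f b ∂ν ∂μ = ∫ b, (∫ a, k a b * φ a ∂μ) • f b ∂ν :=
  calc ∫ a, φ a • ∫ b, k a b • f b ∂ν ∂μ
      = ∫ a, ∫ b, k a b • φ a • f b ∂ν ∂μ := by
        simp only [← integral_smul, smul_comm (φ _)]
    _ = ∫ b, ∫ a, k a b • φ a • f b ∂μ ∂ν :=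
        integral_integral_swap (integrable_uncurry_smul_smul_of_bounded hk hkC hφ hf)
    _ = ∫ b, (∫ a, k a b * φ a ∂μ) • f b ∂ν := by
        simp only [smul_smul, integral_smul_const]

end Kernel

section Representation

variable {G 𝕜 X : Type*} [AddCommGroup G] [MeasurableSpace G] [MeasurableSub₂ G] [RCLike 𝕜]
  [NormedAddCommGroup X] [NormedSpace ℝ X] [NormedSpace 𝕜 X] [CompleteSpace X]
  {U : G → X →L[𝕜] X} {μ ν : Measure G} {g φ ψ : G → 𝕜} {x : X} {C : ℝ}

theorem apply_integral_smul_translate (hUadd : ∀ s t, U (s + t) = (U s).comp (U t))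
    (hgU : Integrable (fun s ↦ g s • U s x) ν)
    (hψ : Measurable ψ) (hψC : ∀ s, ‖ψ s‖ ≤ C) (t : G) :
    U t (∫ s, (g s * ψ (s - t)) • U (s - t) x ∂ν) = ∫ s, ψ (s - t) • g s • U s x ∂ν := by
  have translate (r s : G) : U r (U s x) = U (r + s) x := by rw [hUadd]; rfl
  have weighted_orbit_integrable : Integrable (fun s ↦ ψ (s - t) • g s • U s x) ν :=
    hgU.bdd_smul C (hψ.comp (measurable_id.sub_const t)).aestronglyMeasurable
      (.of_forall fun s ↦ hψC (s - t))
  -- Factoring out `U (-t)` yields integrability with no bound on the operators `U (s - t)`.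
  have integrand_eq (s : G) :
      (g s * ψ (s - t)) • U (s - t) x = U (-t) (ψ (s - t) • g s • U s x) := by
    rw [map_smul, map_smul, translate, neg_add_eq_sub, smul_smul, mul_comm]
  have integrand_integrable : Integrable (fun s ↦ (g s * ψ (s - t)) • U (s - t) x) ν := by
    simpa only [integrand_eq] using (U (-t)).integrable_comp weighted_orbit_integrable
  rw [← (U t).integral_comp_comm integrand_integrable]
  simp only [map_smul, translate, add_sub_cancel, mul_comm (g _), mul_smul]

theorem integral_smul_apply_integral_translate [SFinite μ] [SFinite ν]
    (hUadd : ∀ s t, U (s + t) = (U s).comp (U t))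
    (hgU : Integrable (fun s ↦ g s • U s x) ν) (hφ : Integrable φ μ)
    (hψ : Measurable ψ) (hψC : ∀ s, ‖ψ s‖ ≤ C) :
    ∫ t, φ t • U t (∫ s, (g s * ψ (s - t)) • U (s - t) x ∂ν) ∂μ
      = ∫ s, (∫ t, ψ (s - t) * φ t ∂μ) • g s • U s x ∂ν := by
  simp only [apply_integral_smul_translate hUadd hgU hψ hψC]
  exact integral_smul_integral_kernel_smul
    (hψ.comp (measurable_snd.sub measurable_fst)).aestronglyMeasurable
    (fun t s ↦ hψC (s - t)) hφ hgU

-- With two measures, `g` may be the density of any complex measure with respect to its total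
-- variation `ν`, while `ψ ∗ φ` is formed with respect to, say, a Haar measure `μ`.
theorem transference_factorization_general [SFinite μ] [SFinite ν]
    (hUadd : ∀ s t, U (s + t) = (U s).comp (U t))
    (hgU : Integrable (fun s ↦ g s • U s x) ν) (hφ : Integrable φ μ)
    (hψ : Measurable ψ) (hψC : ∀ s, ‖ψ s‖ ≤ C)
    (hconv : ∀ s, g s ≠ 0 → ∫ t, ψ (s - t) * φ t ∂μ = 1) :
    ∫ t, φ t • U t (∫ s, (g s * ψ (s - t)) • U (s - t) x ∂ν) ∂μ = ∫ s, g s • U s x ∂ν := by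
  rw [integral_smul_apply_integral_translate hUadd hgU hφ hψ hψC]
  congr! 2 with s
  by_cases hs : g s = 0
  · rw [hs, zero_smul, smul_zero]
  · rw [hconv s hs, one_smul]

end Representation

theorem integrable_smul_of_forall_lt_norm_eq_zero {V 𝕜 E : Type*} [NormedAddCommGroup V]
    [ProperSpace V] [MeasurableSpace V] [OpensMeasurableSpace V] [NormedRing 𝕜]
    [NormedAddCommGroup E] [Module 𝕜 E] [IsBoundedSMul 𝕜 E] {μ : Measure V}
    {g : V → 𝕜} {f : V → E} {N : ℝ} (hg : Integrable g μ)
    (hgsupp : ∀ s, N < ‖s‖ → g s = 0) (hf : Continuous f) :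
    Integrable (fun s ↦ g s • f s) μ := by
  have smul_integrableOn : IntegrableOn (fun s ↦ g s • f s) (Metric.closedBall 0 N) μ :=
    hg.integrableOn.smul_continuousOn hf.continuousOn (isCompact_closedBall 0 N)
  refine smul_integrableOn.integrable_of_forall_notMem_eq_zero fun s hs ↦ ?_
  rw [hgsupp s (by simpa only [mem_closedBall_zero_iff, not_le] using hs), zero_smul]

/-- The factorization `U_μ = P ∘ L_μ ∘ ι` underlying the transference
principle: if `g` is integrable with support in `[-N,N]` and `φ, ψ` are continuous with
compact support satisfying `(ψ∗φ)(s) = 1` for `|s| ≤ N`, then for every `x`,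
`∫ φ(t) U(t) ( ∫ g(s) ψ(s-t) U(s-t)x ds ) dt = ∫ g(s) U(s)x ds`. -/
theorem transference_factorization
    {X : Type*} [NormedAddCommGroup X] [NormedSpace ℂ X] [CompleteSpace X]
    (U : ℝ → X →L[ℂ] X)
    (hU0 : U 0 = ContinuousLinearMap.id ℂ X)
    (hUadd : ∀ s t : ℝ, U (s + t) = (U s).comp (U t))
    (hUcont : ∀ x : X, Continuous fun s : ℝ => U s x)
    (N : ℝ) (hN : 0 < N)
    (g : ℝ → ℂ) (hgint : Integrable g) (hgsupp : ∀ s : ℝ, N < |s| → g s = 0)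
    (φ ψ : ℝ → ℂ)
    (hφcont : Continuous φ) (hφsupp : HasCompactSupport φ)
    (hψcont : Continuous ψ) (hψsupp : HasCompactSupport ψ)
    (hconv : ∀ s : ℝ, |s| ≤ N → ∫ t : ℝ, ψ (s - t) * φ t = 1) :
    ∀ x : X,
      ∫ t : ℝ, φ t • U t (∫ s : ℝ, (g s * ψ (s - t)) • U (s - t) x)
        = ∫ s : ℝ, g s • U s x := by
  obtain ⟨C, hψC⟩ := hψsupp.exists_bound_of_continuous hψcont
  exact fun x ↦ transference_factorization_general hUadd
    (integrable_smul_of_forall_lt_norm_eq_zero hgint hgsupp (hUcont x))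
    (hφcont.integrable_of_hasCompactSupport hφsupp) hψcont.measurable hψC
    fun s hs ↦ hconv s (not_lt.mp (mt (hgsupp s) hs))
end

section
/- Let 0 < ω′ < ω and ψ ∈ (0, π/2), and set Σ_ψ := {z ∈ ℂ \ {0} : |arg z| < ψ or |arg(−z)| < ψ} and V_{ω,ψ} := St_ω ∪ Σ_ψ. Then there exists a constant C ≥ 0 such that for every function f that is holomorphic and bounded on the open set V_{ω,ψ}, one has, for all z ∈ St_{ω′}: |f(z)| + (1+|z|)·|f′(z)| ≤ C · sup_{w ∈ V_{ω,ψ}} |f(w)|. In other words, H^∞(V_{ω,ψ}) embeds continuously into the analytic Mikhlin algebra H^∞₁(St_{ω′}). -/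
open Filter Topology Real

/-!
The venturi domain widens linearly: every point of its complement satisfies
`1 + ‖w‖ ≤ const * |w.im|`, while its distance to the narrower strip is at least a fixed fraction
of `|w.im|`. Hence each `z` in the narrower strip is the centre of a disc of radius comparable to
`1 + ‖z‖` inside the domain, and Cauchy's estimate on that disc bounds `(1 + ‖z‖) * ‖deriv f z‖`.
-/

/-- The open horizontal strip `St_ω` of half-height `ω`. -/
def horizontalStrip (ω : ℝ) : Set ℂ :=
  {z | |z.im| < ω}

/-- The open double sector `Σ_ψ` of half-angle `ψ` around the real axis. The origin has to be
removed explicitly because `Complex.arg 0 = 0`. -/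
def doubleSector (ψ : ℝ) : Set ℂ :=
  {z | z ≠ 0 ∧ (|Complex.arg z| < ψ ∨ |Complex.arg (-z)| < ψ)}

/-- The venturi-shaped domain `V_{ω,ψ} = St_ω ∪ Σ_ψ`, on which the bounded holomorphic functions
are considered. -/
def venturi (ω ψ : ℝ) : Set ℂ :=
  horizontalStrip ω ∪ doubleSector ψ

lemma sin_mul_norm_le_abs_im {φ : ℝ} {w : ℂ} (hφ : -(π / 2) ≤ φ) (hre : 0 ≤ w.re)
    (harg : φ ≤ |Complex.arg w|) : sin φ * ‖w‖ ≤ |w.im| := by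
  have hsin : sin φ ≤ sin |Complex.arg w| :=
    sin_le_sin_of_le_of_le_pi_div_two hφ (Complex.abs_arg_le_pi_div_two_iff.mpr hre) harg
  calc
    sin φ * ‖w‖ ≤ sin |Complex.arg w| * ‖w‖ := by gcongr
    _ = |‖w‖ * sin (Complex.arg w)| := by
      rw [abs_mul, abs_norm, abs_sin_eq_sin_abs_of_abs_le_pi (Complex.abs_arg_le_pi w), mul_comm]
    _ = |w.im| := by rw [Complex.norm_mul_sin_arg]

lemma sin_min_mul_norm_le_abs_im_of_notMem_doubleSector {ψ : ℝ} {w : ℂ} (hψ : -(π / 2) ≤ ψ)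
    (hw : w ∉ doubleSector ψ) : sin (min ψ (π / 2)) * ‖w‖ ≤ |w.im| := by
  rcases eq_or_ne w 0 with rfl | hw0
  · simp
  obtain ⟨harg, harg_neg⟩ : ψ ≤ |Complex.arg w| ∧ ψ ≤ |Complex.arg (-w)| := by
    simpa [doubleSector, hw0] using hw
  have hmin : -(π / 2) ≤ min ψ (π / 2) := le_min hψ (by linarith [pi_pos])
  rcases le_total 0 w.re with hre | hre
  · exact sin_mul_norm_le_abs_im hmin hre (min_le_of_left_le harg)
  · simpa using sin_mul_norm_le_abs_im (w := -w) hmin (by simpa using hre)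
      (min_le_of_left_le harg_neg)

lemma exists_one_add_norm_le_mul_abs_im_of_notMem_venturi {ω ψ : ℝ} (hω : 0 < ω) (hψ : 0 < ψ) :
    ∃ K : ℝ, 0 < K ∧ ∀ w ∉ venturi ω ψ, 1 + ‖w‖ ≤ K * |w.im| := by
  set s := sin (min ψ (π / 2))
  have hs : 0 < s :=
    sin_pos_of_pos_of_lt_pi (lt_min hψ (by positivity))
      ((min_le_right _ _).trans_lt (by linarith [pi_pos]))
  refine ⟨1 / ω + 1 / s, by positivity, fun w hw ↦ ?_⟩
  obtain ⟨hstrip, hsector⟩ : w ∉ horizontalStrip ω ∧ w ∉ doubleSector ψ := not_or.mp hw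
  have hone : 1 ≤ |w.im| / ω := (one_le_div hω).mpr (not_lt.mp hstrip)
  have hnorm : ‖w‖ ≤ |w.im| / s := by
    rw [le_div_iff₀' hs]
    exact sin_min_mul_norm_le_abs_im_of_notMem_doubleSector (by linarith [pi_pos]) hsector
  calc
    1 + ‖w‖ ≤ |w.im| / ω + |w.im| / s := add_le_add hone hnorm
    _ = (1 / ω + 1 / s) * |w.im| := by ring

lemma sub_mul_abs_im_le_mul_norm_sub {ω ω' : ℝ} {z w : ℂ} (hω : 0 ≤ ω) (hz : |z.im| ≤ ω')
    (hw : ω ≤ |w.im|) : (ω - ω') * |w.im| ≤ ω * ‖w - z‖ := by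
  have hω' : 0 ≤ ω' := (abs_nonneg _).trans hz
  have him : |w.im| ≤ ω' + ‖w - z‖ := by
    have hsub : |w.im - z.im| ≤ ‖w - z‖ := Complex.abs_im_le_norm (w - z)
    linarith [abs_sub_abs_le_abs_sub w.im z.im]
  calc
    (ω - ω') * |w.im| = ω * |w.im| - ω' * |w.im| := by ring
    _ ≤ ω * (ω' + ‖w - z‖) - ω' * ω := by gcongr
    _ = ω * ‖w - z‖ := by ring

lemma exists_mul_one_add_norm_le_norm_sub_of_notMem_venturi {ω ω' ψ : ℝ} (hω : 0 < ω)
    (hωω' : ω' < ω) (hψ : 0 < ψ) :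
    ∃ k : ℝ, 0 < k ∧
      ∀ z w : ℂ, |z.im| ≤ ω' → w ∉ venturi ω ψ → k * (1 + ‖w‖) ≤ ‖w - z‖ := by
  obtain ⟨K, hK, hKw⟩ := exists_one_add_norm_le_mul_abs_im_of_notMem_venturi hω hψ
  have hgap : 0 < ω - ω' := sub_pos.mpr hωω'
  refine ⟨(ω - ω') / (ω * K), by positivity, fun z w hz hw ↦ ?_⟩
  have him : ω ≤ |w.im| := not_lt.mp (not_or.mp hw).1
  calc
    (ω - ω') / (ω * K) * (1 + ‖w‖) ≤ (ω - ω') / (ω * K) * (K * |w.im|) := by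
      gcongr
      exact hKw w hw
    _ = (ω - ω') * |w.im| / ω := by field_simp
    _ ≤ ‖w - z‖ := (div_le_iff₀' hω).mpr (sub_mul_abs_im_le_mul_norm_sub hω.le hz him)

lemma exists_closedBall_subset_venturi {ω ω' ψ : ℝ} (hω : 0 < ω) (hωω' : ω' < ω) (hψ : 0 < ψ) :
    ∃ c : ℝ, 0 < c ∧
      ∀ z : ℂ, |z.im| ≤ ω' → Metric.closedBall z (c * (1 + ‖z‖)) ⊆ venturi ω ψ := by
  obtain ⟨k, hk, hkw⟩ := exists_mul_one_add_norm_le_norm_sub_of_notMem_venturi hω hωω' hψ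
  -- A point outside is at distance at least `k / (1 + k) * (1 + ‖z‖)`; the smaller constant
  -- leaves room for the closed ball.
  refine ⟨k / (2 + k), by positivity, fun z hz w hball ↦ ?_⟩
  by_contra hw
  have hnear : (2 + k) * ‖w - z‖ ≤ k * (1 + ‖z‖) := by
    rwa [mem_closedBall_iff_norm, div_mul_eq_mul_div, le_div_iff₀' (by positivity)] at hball
  have hfar : k * (1 + ‖z‖) ≤ (1 + k) * ‖w - z‖ :=
    calc
      k * (1 + ‖z‖) ≤ k * (1 + (‖w‖ + ‖w - z‖)) := by
        gcongr
        exact norm_le_norm_add_norm_sub w z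
      _ = k * (1 + ‖w‖) + k * ‖w - z‖ := by ring
      _ ≤ ‖w - z‖ + k * ‖w - z‖ := by
        gcongr
        exact hkw z w hz hw
      _ = (1 + k) * ‖w - z‖ := by ring
  have hpos : 0 < ‖w - z‖ := lt_of_lt_of_le (by positivity) (hkw z w hz hw)
  linarith

section BanachValued

variable {E : Type*} [NormedAddCommGroup E] [NormedSpace ℂ E]

lemma norm_deriv_le_div_of_closedBall_subset {f : ℂ → E} {U : Set ℂ} {z : ℂ} {B r : ℝ}
    (hr : 0 < r) (hU : Metric.closedBall z r ⊆ U) (hf : DifferentiableOn ℂ f U)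
    (hB : ∀ w ∈ U, ‖f w‖ ≤ B) : ‖deriv f z‖ ≤ B / r :=
  Complex.norm_deriv_le_of_forall_mem_sphere_norm_le hr (hf.diffContOnCl_ball hU)
    fun w hw ↦ hB w (hU (Metric.sphere_subset_closedBall hw))

theorem Hinf_venturi_embeds_analytic_mikhlin_general {ω ω' ψ : ℝ} (hω : 0 < ω) (hωω' : ω' < ω)
    (hψ : 0 < ψ) :
    ∃ C : ℝ, 0 ≤ C ∧
      ∀ f : ℂ → E, DifferentiableOn ℂ f (venturi ω ψ) →
        ∀ B : ℝ, (∀ w ∈ venturi ω ψ, ‖f w‖ ≤ B) →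
          ∀ z : ℂ, |z.im| ≤ ω' → ‖f z‖ + (1 + ‖z‖) * ‖deriv f z‖ ≤ C * B := by
  obtain ⟨c, hc, hball⟩ := exists_closedBall_subset_venturi hω hωω' hψ
  refine ⟨1 + 1 / c, by positivity, fun f hf B hB z hz ↦ ?_⟩
  have hr : 0 < c * (1 + ‖z‖) := by positivity
  have hfz : ‖f z‖ ≤ B := hB z (hball z hz (Metric.mem_closedBall_self hr.le))
  have hderiv : ‖deriv f z‖ ≤ B / (c * (1 + ‖z‖)) :=
    norm_deriv_le_div_of_closedBall_subset hr (hball z hz) hf hB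
  calc
    ‖f z‖ + (1 + ‖z‖) * ‖deriv f z‖ ≤ B + (1 + ‖z‖) * (B / (c * (1 + ‖z‖))) := by gcongr
    _ = (1 + 1 / c) * B := by field_simp

end BanachValued

/-- For `0 < ω' < ω` and `ψ ∈ (0, π/2)`, with
`Σ_ψ = {z ≠ 0 : |arg z| < ψ or |arg(-z)| < ψ}` and `V_{ω,ψ} = St_ω ∪ Σ_ψ`, there is
`C ≥ 0` such that every bounded holomorphic `f` on `V_{ω,ψ}` satisfies
`|f(z)| + (1+|z|)|f'(z)| ≤ C · sup_{V_{ω,ψ}} |f|` on `St_{ω'}`; i.e. `H^∞(V_{ω,ψ})`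
embeds continuously into the analytic Mikhlin algebra `H^∞₁(St_{ω'})`. -/
theorem Hinf_venturi_embeds_analytic_mikhlin
    (ω ω' ψ : ℝ) (hω' : 0 < ω') (hωω' : ω' < ω) (hψ0 : 0 < ψ) (hψ : ψ < π / 2) :
    ∃ C : ℝ, 0 ≤ C ∧
      ∀ f : ℂ → ℂ,
        DifferentiableOn ℂ f
          ({z : ℂ | |z.im| < ω} ∪
            {z : ℂ | z ≠ 0 ∧ (|Complex.arg z| < ψ ∨ |Complex.arg (-z)| < ψ)}) →
        ∀ B : ℝ,
          (∀ w ∈ ({z : ℂ | |z.im| < ω} ∪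
              {z : ℂ | z ≠ 0 ∧ (|Complex.arg z| < ψ ∨ |Complex.arg (-z)| < ψ)}),
            ‖f w‖ ≤ B) →
          ∀ z : ℂ, |z.im| < ω' →
            ‖f z‖ + (1 + ‖z‖) * ‖deriv f z‖ ≤ C * B := by
  obtain ⟨C, hC, hbound⟩ :=
    Hinf_venturi_embeds_analytic_mikhlin_general (E := ℂ) (hω'.trans hωω') hωω' hψ0
  exact ⟨C, hC, fun f hf B hB z hz ↦ hbound f hf B hB z hz.le⟩
end
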